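/- Let n ≥ 2, m > 1 and δ > 1/2. There exists a constant C > 0 such that for every Schwartz function φ on ℝⁿ, ‖⟨x⟩^{-δ} |D_x|^{(m-1)/2} e^{itp(D_x)} φ‖_{L²(ℝ^{1+n}_{t,x})} ≤ C ‖φ‖_{L²(ℝⁿ)}. -/

import Mathlib

open MeasureTheory Real Complex RealInnerProductSpace

noncomputable section

/-- Fourier transform with convention `(2π)^(-n/2) ∫ e^(-ix·ξ) f(x) dx`. -/
def FT (n : ℕ) (f : EuclideanSpace ℝ (Fin n) → ℂ) (ξ : EuclideanSpace ℝ (Fin n)) : ℂ :=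
  ((2 * π) ^ (-(n : ℝ) / 2) : ℝ) •
    ∫ x : EuclideanSpace ℝ (Fin n), Complex.exp (-Complex.I * ((⟪x, ξ⟫ : ℝ) : ℂ)) * f x

/-- Inverse Fourier transform. -/
def IFT (n : ℕ) (F : EuclideanSpace ℝ (Fin n) → ℂ) (x : EuclideanSpace ℝ (Fin n)) : ℂ :=
  ((2 * π) ^ (-(n : ℝ) / 2) : ℝ) •
    ∫ ξ : EuclideanSpace ℝ (Fin n), Complex.exp (Complex.I * ((⟪x, ξ⟫ : ℝ) : ℂ)) * F ξ

/-- Fourier multiplier with symbol `q`: `q(D_x) f = IFT (q · FT f)`. -/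
def mult (n : ℕ) (q : EuclideanSpace ℝ (Fin n) → ℂ) (f : EuclideanSpace ℝ (Fin n) → ℂ) :
    EuclideanSpace ℝ (Fin n) → ℂ :=
  IFT n fun ξ => q ξ * FT n f ξ

section Plancherel

open FourierTransform

variable {E : Type*} [NormedAddCommGroup E] [InnerProductSpace ℝ E] [FiniteDimensional ℝ E]
  [MeasurableSpace E] [BorelSpace E]

/-- On `L¹ ∩ L²` the Fourier integral represents the `L²` Fourier transform. -/
theorem fourier_ae_eq_fourier_toLp {f : E → ℂ} (hf : Integrable f) (hf2 : MemLp f 2) :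
    𝓕 f =ᵐ[volume] (𝓕 (hf2.toLp f) : Lp (α := E) ℂ 2) := by
  have hcont : Continuous (𝓕 f) :=
    VectorFourier.fourierIntegral_continuous Real.continuous_fourierChar
      continuous_inner hf
  refine ae_eq_of_integral_contDiff_smul_eq hcont.locallyIntegrable
    ((Lp.memLp (𝓕 (hf2.toLp f))).locallyIntegrable (by norm_num)) fun g hg hgc => ?_
  have hg' : ContDiff ℝ ((⊤ : ℕ∞) : WithTop ℕ∞) (fun x => (g x : ℂ)) :=
    Complex.ofRealCLM.contDiff.comp hg
  have hgc' : HasCompactSupport (fun x => (g x : ℂ)) :=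
    hgc.comp_left (g := fun r : ℝ => (r : ℂ)) Complex.ofReal_zero
  set ψ : SchwartzMap E ℂ := hgc'.toSchwartzMap hg' with hψ
  have hψx : ∀ x, ψ x = (g x : ℂ) := fun x => rfl
  have h1 : ∫ x, g x • 𝓕 f x = ∫ x, 𝓕 (ψ : E → ℂ) x • f x := by
    have := VectorFourier.integral_fourierIntegral_smul_eq_flip (L := innerₗ E)
      Real.continuous_fourierChar continuous_inner (μ := volume) (ν := volume)
      ψ.integrable hf
    rw [flip_innerₗ] at this
    calc ∫ x, g x • 𝓕 f x = ∫ x, ψ x • 𝓕 f x := by simp [hψx]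
      _ = _ := this.symm
  have h2 : ∫ x, g x • (𝓕 (hf2.toLp f) : Lp ℂ 2 (volume : Measure E)) x
      = ∫ x, 𝓕 (ψ : E → ℂ) x • f x := by
    have := congrArg (fun T => T ψ) (Lp.fourier_toTemperedDistribution_eq (hf2.toLp f))
    simp only [TemperedDistribution.fourier_apply, Lp.toTemperedDistribution_apply] at this
    calc ∫ x, g x • (𝓕 (hf2.toLp f) : Lp ℂ 2 (volume : Measure E)) x
        = ∫ x, ψ x • (𝓕 (hf2.toLp f) : Lp ℂ 2 (volume : Measure E)) x := by simp [hψx]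
      _ = _ := this.symm
      _ = _ := by
        refine integral_congr_ae ?_
        filter_upwards [hf2.coeFn_toLp] with x hx
        rw [hx, SchwartzMap.fourier_coe]
  rw [h1, h2]

/-- Plancherel's theorem on `L¹ ∩ L²`. -/
theorem eLpNorm_fourier_eq {f : E → ℂ} (hf : Integrable f) (hf2 : MemLp f 2) :
    eLpNorm (𝓕 f) 2 volume = eLpNorm f 2 volume := by
  rw [eLpNorm_congr_ae (fourier_ae_eq_fourier_toLp hf hf2), ← eLpNorm_congr_ae hf2.coeFn_toLp,
    ← Lp.enorm_def, ← Lp.enorm_def, ← ofReal_norm, ← ofReal_norm, Lp.norm_fourier_eq]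

theorem lintegral_enorm_sq_eq_eLpNorm_sq {α : Type*} [MeasurableSpace α] (μ : Measure α)
    (f : α → ℂ) : ∫⁻ x, ‖f x‖ₑ ^ 2 ∂μ = eLpNorm f 2 μ ^ 2 := by
  have := eLpNorm_nnreal_pow_eq_lintegral (f := f) (μ := μ) (p := 2) two_ne_zero
  simpa using this.symm

theorem lintegral_enorm_sq_fourier_le {f : E → ℂ} (hf : Integrable f) :
    ∫⁻ x, ‖𝓕 f x‖ₑ ^ 2 ≤ ∫⁻ x, ‖f x‖ₑ ^ 2 := by
  by_cases h : eLpNorm f 2 volume < ⊤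
  · rw [lintegral_enorm_sq_eq_eLpNorm_sq, lintegral_enorm_sq_eq_eLpNorm_sq,
      eLpNorm_fourier_eq hf ⟨hf.1, h⟩]
  · rw [lintegral_enorm_sq_eq_eLpNorm_sq volume f, not_lt_top_iff.1 h]
    simp

/-- Plancherel's inequality in the angular frequency convention. -/
theorem lintegral_enorm_sq_integral_exp_le {f : E → ℂ} (hf : Integrable f) :
    ∫⁻ y : E, ‖∫ η, Complex.exp (Complex.I * ((⟪y, η⟫ : ℝ) : ℂ)) * f η‖ₑ ^ 2
      ≤ ENNReal.ofReal ((2 * π) ^ Module.finrank ℝ E) * ∫⁻ x, ‖f x‖ₑ ^ 2 := by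
  have key : ∀ y : E, ∫ η, Complex.exp (Complex.I * ((⟪y, η⟫ : ℝ) : ℂ)) * f η
      = 𝓕 f ((-(2 * π)⁻¹ : ℝ) • y) := by
    intro y
    rw [Real.fourier_eq']
    refine integral_congr_ae (Filter.Eventually.of_forall fun η => ?_)
    simp only [inner_smul_right, smul_eq_mul]
    congr 2
    rw [real_inner_comm]
    push_cast
    field_simp
  simp_rw [key]
  have hpi : (0 : ℝ) < 2 * π := by positivity
  have hne : (-(2 * π)⁻¹ : ℝ) ≠ 0 := by
    simp [Real.pi_ne_zero]
  have hmap := Measure.map_addHaar_smul (volume : Measure E) hne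
  have hemb : MeasurableEmbedding (fun y : E => (-(2 * π)⁻¹ : ℝ) • y) :=
    (Homeomorph.smulOfNeZero _ hne).measurableEmbedding
  have : ∫⁻ y : E, ‖𝓕 f ((-(2 * π)⁻¹ : ℝ) • y)‖ₑ ^ 2
      = ENNReal.ofReal ((2 * π) ^ Module.finrank ℝ E) * ∫⁻ x, ‖𝓕 f x‖ₑ ^ 2 := by
    rw [← hemb.lintegral_map (fun x => ‖𝓕 f x‖ₑ ^ 2)]
    change ∫⁻ x, ‖𝓕 f x‖ₑ ^ 2 ∂(Measure.map (fun y : E => (-(2 * π)⁻¹ : ℝ) • y) volume) = _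
    rw [show (fun y : E => (-(2 * π)⁻¹ : ℝ) • y) = ((-(2 * π)⁻¹ : ℝ) • ·) from rfl, hmap,
      lintegral_smul_measure, smul_eq_mul, abs_inv, abs_pow, abs_neg, abs_inv, inv_pow, inv_inv,
      abs_of_pos hpi]
  rw [this]
  refine mul_le_mul_of_nonneg_left ?_ zero_le
  exact lintegral_enorm_sq_fourier_le hf

end Plancherel

section ChangeOfVariables

variable {E : Type*} [NormedAddCommGroup E] [InnerProductSpace ℝ E]

/-- Replace the component of `ξ` in the direction of the unit vector `e` by `p ξ`. -/
def straighten (e : E) (p : E → ℝ) (ξ : E) : E := ξ + (p ξ - ⟪e, ξ⟫) • e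

theorem HasFDerivAt.straighten {e : E} {p : E → ℝ} {p' : E →L[ℝ] ℝ} {ξ : E}
    (hp : HasFDerivAt p p' ξ) :
    HasFDerivAt (straighten e p)
      (ContinuousLinearMap.id ℝ E + (p' - innerSL ℝ e).smulRight e) ξ :=
  (hasFDerivAt_id ξ).add ((hp.sub (innerSL ℝ e).hasFDerivAt).smul_const e)

theorem det_id_add_smulRight [FiniteDimensional ℝ E] (f : E →L[ℝ] ℝ) (e : E) :
    (ContinuousLinearMap.id ℝ E + f.smulRight e).det = 1 + f e :=
  LinearMap.transvection.det f.toLinearMap e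

theorem inner_add_mul_eq_inner_straighten {e : E} (he : ‖e‖ = 1) (p : E → ℝ) (t : ℝ) (x ξ : E) :
    ⟪x, ξ⟫ + t * p ξ = ⟪x + (t - ⟪e, x⟫) • e, straighten e p ξ⟫ + ⟪e, x⟫ * ⟪e, ξ⟫ := by
  have h1 : ⟪e, e⟫ = (1 : ℝ) := by rw [real_inner_self_eq_norm_sq, he]; norm_num
  simp only [straighten, inner_add_left, inner_add_right, real_inner_smul_left,
    real_inner_smul_right, h1, real_inner_comm e x]
  ring

variable [FiniteDimensional ℝ E] [MeasurableSpace E] [BorelSpace E]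

theorem lintegral_enorm_sq_integral_exp_straighten_le {e : E} (he : ‖e‖ = 1) {S : Set E}
    (hS : MeasurableSet S) {p : E → ℝ} {p' : E → E →L[ℝ] ℝ}
    (hp : ∀ ξ ∈ S, HasFDerivAt p (p' ξ) ξ) (hpos : ∀ ξ ∈ S, 0 < p' ξ e)
    (hinj : Set.InjOn (straighten e p) S) {G : E → ℂ} (hG : IntegrableOn G S) :
    ∫⁻ y : E, ‖∫ ξ in S, Complex.exp (Complex.I * ((⟪y, straighten e p ξ⟫ : ℝ) : ℂ)) * G ξ‖ₑ ^ 2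
      ≤ ENNReal.ofReal ((2 * π) ^ Module.finrank ℝ E) *
        ∫⁻ ξ in S, ENNReal.ofReal (p' ξ e)⁻¹ * ‖G ξ‖ₑ ^ 2 := by
  set Φ := straighten e p with hΦ
  set Φ' : E → E →L[ℝ] E := fun ξ =>
    ContinuousLinearMap.id ℝ E + (p' ξ - innerSL ℝ e).smulRight e with hΦ'
  have hd : ∀ ξ ∈ S, HasFDerivWithinAt Φ (Φ' ξ) S ξ := fun ξ hξ =>
    (hp ξ hξ).straighten.hasFDerivWithinAt
  have hdet : ∀ ξ ∈ S, |(Φ' ξ).det| = p' ξ e := by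
    intro ξ hξ
    rw [hΦ', det_id_add_smulRight]
    simp [he, abs_of_pos (hpos ξ hξ)]
  set Ψ := Function.invFunOn Φ S with hΨ
  have hΨΦ : ∀ ξ ∈ S, Ψ (Φ ξ) = ξ := fun ξ hξ => hinj.leftInvOn_invFunOn hξ
  have himg : MeasurableSet (Set.image Φ S) := measurable_image_of_fderivWithin hS hd hinj
  set H : E → ℂ := fun η => ((p' (Ψ η) e)⁻¹ : ℝ) • G (Ψ η) with hH
  have hJH : ∀ ξ ∈ S, |(Φ' ξ).det| • H (Φ ξ) = G ξ := by
    intro ξ hξ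
    simp only [hH, hΨΦ ξ hξ, hdet ξ hξ]
    rw [smul_smul, mul_inv_cancel₀ (hpos ξ hξ).ne', one_smul]
  have hHint : IntegrableOn H (Set.image Φ S) := by
    rw [integrableOn_image_iff_integrableOn_abs_det_fderiv_smul _ hS hd hinj]
    exact hG.congr_fun (fun ξ hξ => (hJH ξ hξ).symm) hS
  have hK := lintegral_enorm_sq_integral_exp_le (hHint.integrable_indicator himg)
  have hleft : ∀ y : E,
      ∫ ξ in S, Complex.exp (Complex.I * ((⟪y, Φ ξ⟫ : ℝ) : ℂ)) * G ξ
        = ∫ η, Complex.exp (Complex.I * ((⟪y, η⟫ : ℝ) : ℂ)) * (Set.image Φ S).indicator H η := by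
    intro y
    have : ∀ η, Complex.exp (Complex.I * ((⟪y, η⟫ : ℝ) : ℂ)) * (Set.image Φ S).indicator H η
        = (Set.image Φ S).indicator
          (fun η => Complex.exp (Complex.I * ((⟪y, η⟫ : ℝ) : ℂ)) * H η) η := fun η =>
      by
      by_cases hη : η ∈ Set.image Φ S <;> simp [hη]
    simp_rw [this]
    rw [integral_indicator himg,
      integral_image_eq_integral_abs_det_fderiv_smul _ hS hd hinj]
    refine setIntegral_congr_fun hS fun ξ hξ => ?_
    rw [← mul_smul_comm, hJH ξ hξ]
  have hright : ∫⁻ x, ‖(Set.image Φ S).indicator H x‖ₑ ^ 2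
      = ∫⁻ ξ in S, ENNReal.ofReal (p' ξ e)⁻¹ * ‖G ξ‖ₑ ^ 2 := by
    have : ∀ x, ‖(Set.image Φ S).indicator H x‖ₑ ^ 2 = (Set.image Φ S).indicator (fun x => ‖H x‖ₑ ^ 2) x := by
      intro x
      by_cases hx : x ∈ Set.image Φ S <;> simp [hx]
    simp_rw [this]
    rw [lintegral_indicator himg, lintegral_image_eq_lintegral_abs_det_fderiv_mul _ hS hd hinj]
    refine setLIntegral_congr_fun hS fun ξ hξ => ?_
    have hq := hpos ξ hξ
    simp only [hH, hΨΦ ξ hξ, hdet ξ hξ, enorm_smul, mul_pow]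
    rw [← mul_assoc, Real.enorm_of_nonneg (inv_nonneg.2 hq.le), sq, ← mul_assoc,
      ← ENNReal.ofReal_mul hq.le, mul_inv_cancel₀ hq.ne', ENNReal.ofReal_one, one_mul]
  simp_rw [hleft, ← hright]
  exact hK

/-- Exchanging `t` with the `e`-component of `x` preserves volume. -/
theorem measurePreserving_exchange {e : E} (he : ‖e‖ = 1) :
    MeasurePreserving (fun q : ℝ × E => (⟪e, q.2⟫, q.2 + (q.1 - ⟪e, q.2⟫) • e))
      (volume : Measure (ℝ × E)) volume := by
  have h1 : ⟪e, e⟫ = (1 : ℝ) := by rw [real_inner_self_eq_norm_sq, he]; norm_num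
  have A : MeasurePreserving (fun q : ℝ × E => (q.1, q.2 + q.1 • e))
      (volume : Measure (ℝ × E)) volume :=
    (MeasurePreserving.id (volume : Measure ℝ)).skew_product (g := fun (t : ℝ) (x : E) => x + t • e)
      (by unfold Function.uncurry; fun_prop)
      (Filter.Eventually.of_forall fun t => map_add_right_eq_self _ _)
  have B' : MeasurePreserving (fun q : E × ℝ => (q.1, q.2 - ⟪e, q.1⟫))
      ((volume : Measure E).prod (volume : Measure ℝ)) (volume.prod volume) :=
    (MeasurePreserving.id (volume : Measure E)).skew_product
      (g := fun (x : E) (t : ℝ) => t - ⟪e, x⟫)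
      (by unfold Function.uncurry; fun_prop)
      (Filter.Eventually.of_forall fun x => map_sub_right_eq_self _ _)
  have B : MeasurePreserving (fun q : ℝ × E => (q.1 - ⟪e, q.2⟫, q.2))
      (volume : Measure (ℝ × E)) volume :=
    Measure.measurePreserving_swap.comp (B'.comp Measure.measurePreserving_swap)
  have N : MeasurePreserving (fun q : ℝ × E => (-q.1, q.2))
      (volume : Measure (ℝ × E)) volume :=
    (Measure.measurePreserving_neg (volume : Measure ℝ)).prod (MeasurePreserving.id volume)
  convert (N.comp (A.comp (B.comp A))) using 1
  funext q
  simp only [Function.comp, inner_add_right, real_inner_smul_right, h1]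
  refine Prod.ext ?_ ?_
  · simp
  · simp only
    module

end ChangeOfVariables

theorem norm_exp_I_mul_ofReal_mul (s : ℝ) (z : ℂ) : ‖Complex.exp (Complex.I * s) * z‖ = ‖z‖ := by
  rw [norm_mul, mul_comm Complex.I, Complex.norm_exp_ofReal_mul_I, one_mul]

theorem integrable_exp_I_mul {α : Type*} [MeasurableSpace α] {μ : Measure α} {f : α → ℝ}
    (hf : AEMeasurable f μ) {G : α → ℂ} (hG : Integrable G μ) :
    Integrable (fun ξ => Complex.exp (Complex.I * (f ξ : ℂ)) * G ξ) μ := by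
  refine hG.mono ?_ (Filter.Eventually.of_forall fun ξ => (norm_exp_I_mul_ofReal_mul _ _).le)
  exact AEStronglyMeasurable.mul
    (by
      have : AEMeasurable (fun ξ => Complex.exp (Complex.I * (f ξ : ℂ))) μ := by fun_prop
      exact this.aestronglyMeasurable) hG.1

section LocalSmoothing

variable {E : Type*} [NormedAddCommGroup E] [InnerProductSpace ℝ E] [FiniteDimensional ℝ E]
  [MeasurableSpace E] [BorelSpace E]

/-- On a set where `p` is strictly increasing in the direction `e` and the square of the amplitude
`b` is controlled by `∂ₑ p`, the evolution is square integrable in `(t, x)` against every integrable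
weight in the single variable `⟪e, x⟫`. -/
theorem lintegral_weight_mul_enorm_sq_evolution_le {e : E} (he : ‖e‖ = 1) {T : Set E}
    (hT : MeasurableSet T) {p : E → ℝ} {p' : E → E →L[ℝ] ℝ} (hpm : Measurable p)
    (hp : ∀ ξ ∈ T, HasFDerivAt p (p' ξ) ξ) (hpos : ∀ ξ ∈ T, 0 < p' ξ e)
    (hinj : Set.InjOn (straighten e p) T) {b : E → ℝ} {C : ℝ}
    (hb : ∀ ξ ∈ T, b ξ ^ 2 ≤ C * p' ξ e) {F : E → ℂ}
    (hbF : Integrable fun ξ => (b ξ : ℂ) * F ξ) {W : ℝ → ENNReal} (hW : Measurable W) :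
    ∫⁻ q : ℝ × E, W ⟪e, q.2⟫ * ‖∫ ξ in T, Complex.exp (Complex.I * ((⟪q.2, ξ⟫ : ℝ) : ℂ)) *
        ((b ξ : ℂ) * Complex.exp (Complex.I * (q.1 : ℂ) * (p ξ : ℂ)) * F ξ)‖ₑ ^ 2
      ≤ (∫⁻ s, W s) * (ENNReal.ofReal ((2 * π) ^ Module.finrank ℝ E) *
        (ENNReal.ofReal C * ∫⁻ ξ, ‖F ξ‖ₑ ^ 2)) := by
  set Φ := straighten e p with hΦ
  have hΦm : Measurable Φ := by
    unfold Φ straighten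
    fun_prop
  set G : E → ℂ := fun ξ => (b ξ : ℂ) * F ξ with hG
  set U : ℝ × E → ℂ := fun q => ∫ ξ in T,
    Complex.exp (Complex.I * ((⟪q.2, Φ ξ⟫ : ℝ) : ℂ)) *
      (Complex.exp (Complex.I * ((q.1 * ⟪e, ξ⟫ : ℝ) : ℂ)) * G ξ) with hU
  have hGs : ∀ s : ℝ, Integrable
      (fun ξ => Complex.exp (Complex.I * ((s * ⟪e, ξ⟫ : ℝ) : ℂ)) * G ξ) (volume.restrict T) :=
    fun s => integrable_exp_I_mul (f := fun ξ => s * ⟪e, ξ⟫) (by fun_prop) hbF.restrict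
  have hUc : Continuous U := by
    refine continuous_of_dominated (bound := fun ξ => ‖G ξ‖) (fun q => ?_) (fun q => ?_)
      hbF.restrict.norm ?_
    · exact (integrable_exp_I_mul (f := fun ξ => ⟪q.2, Φ ξ⟫) (by fun_prop) (hGs q.1)).1
    · exact Filter.Eventually.of_forall fun ξ => by
        rw [norm_exp_I_mul_ofReal_mul, norm_exp_I_mul_ofReal_mul]
    · exact Filter.Eventually.of_forall fun ξ => by fun_prop
  have hrew : ∀ q : ℝ × E, ∫ ξ in T, Complex.exp (Complex.I * ((⟪q.2, ξ⟫ : ℝ) : ℂ)) *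
        ((b ξ : ℂ) * Complex.exp (Complex.I * (q.1 : ℂ) * (p ξ : ℂ)) * F ξ)
      = U (⟪e, q.2⟫, q.2 + (q.1 - ⟪e, q.2⟫) • e) := by
    intro q
    refine integral_congr_ae (Filter.Eventually.of_forall fun ξ => ?_)
    have key := congrArg (fun s : ℝ => Complex.exp (Complex.I * (s : ℂ)))
      (inner_add_mul_eq_inner_straighten he p q.1 q.2 ξ)
    simp only [Complex.ofReal_add, mul_add, Complex.exp_add] at key
    simp only [hG]
    rw [← mul_assoc (Complex.exp _) (Complex.exp _), ← key]
    push_cast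
    ring_nf
  simp_rw [hrew]
  have hmeas : Measurable fun q : ℝ × E => W q.1 * ‖U q‖ₑ ^ 2 := by
    have := hUc.measurable
    fun_prop
  have hmp := (measurePreserving_exchange he).lintegral_comp hmeas
  simp only at hmp
  rw [hmp, Measure.volume_eq_prod, lintegral_prod _ hmeas.aemeasurable]
  simp only
  rw [← lintegral_mul_const _ hW]
  refine lintegral_mono fun s => ?_
  have hUs : Measurable fun y => ‖U (s, y)‖ₑ ^ 2 := by
    have := hUc.measurable
    fun_prop
  simp only
  rw [lintegral_const_mul _ hUs]
  refine mul_le_mul_of_nonneg_left ?_ zero_le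
  refine (lintegral_enorm_sq_integral_exp_straighten_le he hT hp hpos hinj (hGs s)).trans ?_
  refine mul_le_mul_of_nonneg_left ?_ zero_le
  rw [← lintegral_const_mul' _ _ ENNReal.ofReal_ne_top]
  refine (setLIntegral_mono' hT fun ξ hξ => ?_).trans (setLIntegral_le_lintegral T _)
  have hq := hpos ξ hξ
  have hn : ‖Complex.exp (Complex.I * ((s * ⟪e, ξ⟫ : ℝ) : ℂ)) * G ξ‖ₑ ^ 2
      = ENNReal.ofReal (b ξ ^ 2) * ‖F ξ‖ₑ ^ 2 := by
    rw [← ofReal_norm, norm_exp_I_mul_ofReal_mul, ofReal_norm, hG]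
    simp only
    rw [enorm_mul, mul_pow, ← ofReal_norm (b ξ : ℂ), Complex.norm_real,
      ← ENNReal.ofReal_pow (norm_nonneg _), Real.norm_eq_abs, sq_abs]
  rw [hn, ← mul_assoc, ← ENNReal.ofReal_mul (inv_nonneg.2 hq.le)]
  refine mul_le_mul_of_nonneg_right (ENNReal.ofReal_le_ofReal ?_) zero_le
  rw [inv_mul_le_iff₀ hq, mul_comm]
  exact hb ξ hξ

end LocalSmoothing

section Cone

variable {E : Type*} [NormedAddCommGroup E] [InnerProductSpace ℝ E]

/-- The open circular cone around `e` of aperture `arccos κ`. -/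
def circularCone (e : E) (κ : ℝ) : Set E := {ξ | κ * ‖ξ‖ < ⟪e, ξ⟫}

theorem isOpen_circularCone (e : E) (κ : ℝ) : IsOpen (circularCone e κ) :=
  isOpen_lt (by fun_prop) (by fun_prop)

theorem ne_zero_of_mem_circularCone {e : E} {κ : ℝ} {ξ : E} (h : ξ ∈ circularCone e κ) :
    ξ ≠ 0 := by
  rintro rfl
  simp [circularCone] at h

theorem self_mem_circularCone {e : E} (he : ‖e‖ = 1) {κ : ℝ} (hκ : κ < 1) :
    e ∈ circularCone e κ := by
  simp [circularCone, he, hκ]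

theorem smul_mem_circularCone {e : E} {κ : ℝ} {ξ : E} (h : ξ ∈ circularCone e κ) {t : ℝ}
    (ht : 0 < t) : t • ξ ∈ circularCone e κ := by
  simp only [circularCone, Set.mem_ofPred_eq, norm_smul, Real.norm_of_nonneg ht.le,
    real_inner_smul_right] at h ⊢
  nlinarith

theorem add_smul_mem_circularCone {e : E} (he : ‖e‖ = 1) {κ : ℝ} (h0 : 0 ≤ κ) (h1 : κ < 1)
    {ξ : E} (h : ξ ∈ circularCone e κ) {s : ℝ} (hs : 0 ≤ s) : ξ + s • e ∈ circularCone e κ := by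
  have hee : ⟪e, e⟫ = (1 : ℝ) := by rw [real_inner_self_eq_norm_sq, he]; norm_num
  simp only [circularCone, Set.mem_ofPred_eq, inner_add_right, real_inner_smul_right, hee] at h ⊢
  have hn : ‖ξ + s • e‖ ≤ ‖ξ‖ + s := by
    refine (norm_add_le _ _).trans ?_
    rw [norm_smul, he, Real.norm_of_nonneg hs, mul_one]
  nlinarith

theorem norm_smul_sub_sq_lt {e : E} (he : ‖e‖ = 1) {κ : ℝ} {ξ : E} (h : ξ ∈ circularCone e κ) :
    ‖‖ξ‖⁻¹ • ξ - e‖ ^ 2 < 2 - 2 * κ := by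
  have hξ : 0 < ‖ξ‖ := norm_pos_iff.2 (ne_zero_of_mem_circularCone h)
  have h' : κ < ‖ξ‖⁻¹ * ⟪e, ξ⟫ := by
    rw [lt_inv_mul_iff₀ hξ, mul_comm]
    exact h
  rw [norm_sub_sq_real, norm_smul, norm_inv, norm_norm, inv_mul_cancel₀ hξ.ne', he,
    real_inner_smul_left, real_inner_comm]
  linarith

section Homogeneous

variable {a : E → ℝ}

theorem fderiv_apply_self_of_homogeneous (ha_hom : ∀ t : ℝ, 0 < t → ∀ ξ, a (t • ξ) = t * a ξ)
    {ξ : E} (hd : DifferentiableAt ℝ a ξ) : fderiv ℝ a ξ ξ = a ξ := by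
  have h1 : HasDerivAt (fun t : ℝ => a (t • ξ)) (fderiv ℝ a ξ ξ) 1 := by
    have hl : HasDerivAt (fun t : ℝ => t • ξ) ξ 1 := by
      simpa using (hasDerivAt_id (1 : ℝ)).smul_const ξ
    have hd' : HasFDerivAt a (fderiv ℝ a ξ) ((1 : ℝ) • ξ) := by
      rw [one_smul]
      exact hd.hasFDerivAt
    exact hd'.comp_hasDerivAt 1 hl
  have h2 : HasDerivAt (fun t : ℝ => a (t • ξ)) (a ξ) 1 := by
    have : HasDerivAt (fun t : ℝ => t * a ξ) (a ξ) 1 := by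
      simpa using (hasDerivAt_id (1 : ℝ)).mul_const (a ξ)
    refine this.congr_of_eventuallyEq ?_
    filter_upwards [lt_mem_nhds (zero_lt_one (α := ℝ))] with t ht using ha_hom t ht ξ
  exact h1.unique h2

theorem fderiv_smul_of_homogeneous (ha_hom : ∀ t : ℝ, 0 < t → ∀ ξ, a (t • ξ) = t * a ξ)
    {t : ℝ} (ht : 0 < t) {ξ : E} (hd : DifferentiableAt ℝ a ξ)
    (hd' : DifferentiableAt ℝ a (t • ξ)) : fderiv ℝ a (t • ξ) = fderiv ℝ a ξ := by
  have h1 : HasFDerivAt (fun ζ => a (t • ζ))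
      ((fderiv ℝ a (t • ξ)).comp (t • ContinuousLinearMap.id ℝ E)) ξ :=
    hd'.hasFDerivAt.comp ξ ((hasFDerivAt_id ξ).const_smul t)
  have h2 : HasFDerivAt (fun ζ => a (t • ζ)) (t • fderiv ℝ a ξ) ξ := by
    have : (fun ζ => a (t • ζ)) = fun ζ => t * a ζ := funext fun ζ => ha_hom t ht ζ
    rw [this]
    exact hd.hasFDerivAt.const_mul t
  have h3 := h1.unique h2
  ext v
  have h4 := congrArg (fun L : E →L[ℝ] ℝ => L v) h3
  simp only [ContinuousLinearMap.comp_apply, smul_apply,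
    ContinuousLinearMap.id_apply, map_smul, smul_eq_mul] at h4
  exact mul_left_cancel₀ ht.ne' h4

/-- In a narrow cone around `e` a positive homogeneous function has a derivative in the direction
`e` bounded from below. -/
theorem exists_circularCone_fderiv_ge
    (ha_smooth : ContDiffOn ℝ (⊤ : ℕ∞) a {(0 : E)}ᶜ)
    (ha_hom : ∀ t : ℝ, 0 < t → ∀ ξ, a (t • ξ) = t * a ξ)
    (ha_pos : ∀ ξ : E, ξ ≠ 0 → 0 < a ξ) {e : E} (he : ‖e‖ = 1) :
    ∃ κ c : ℝ, 0 ≤ κ ∧ κ < 1 ∧ 0 < c ∧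
      ∀ ξ ∈ circularCone e κ, c ≤ fderiv ℝ a ξ e ∧ c * ‖ξ‖ ≤ a ξ := by
  have hat : ∀ ξ : E, ξ ≠ 0 → ContDiffAt ℝ (⊤ : ℕ∞) a ξ := fun ξ hξ =>
    ha_smooth.contDiffAt (isOpen_compl_singleton.mem_nhds hξ)
  have hdiff : ∀ ξ : E, ξ ≠ 0 → DifferentiableAt ℝ a ξ := fun ξ hξ =>
    (hat ξ hξ).differentiableAt (by simp)
  have he0 : e ≠ 0 := fun h => by simp [h] at he
  have hae := ha_pos e he0
  have hcont : ContinuousAt (fun ξ => fderiv ℝ a ξ e) e :=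
    (((hat e he0).fderiv_right (m := 0) (by simp)).continuousAt).clm_apply continuousAt_const
  have h1 : ∀ᶠ ξ in nhds e, a e / 2 < fderiv ℝ a ξ e := by
    refine hcont.eventually (lt_mem_nhds ?_)
    simp only [fderiv_apply_self_of_homogeneous ha_hom (hdiff e he0)]
    linarith
  have h2 : ∀ᶠ ξ in nhds e, a e / 2 < a ξ :=
    (hdiff e he0).continuousAt.eventually (lt_mem_nhds (by linarith))
  obtain ⟨ε, hε, hball⟩ := Metric.eventually_nhds_iff.1 (h1.and h2)
  refine ⟨max 0 (1 - ε ^ 2 / 2), a e / 2, le_max_left _ _, ?_, by linarith, fun ξ hξ => ?_⟩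
  · have : 0 < ε ^ 2 := by positivity
    exact max_lt one_pos (by linarith)
  have hξ0 := ne_zero_of_mem_circularCone hξ
  have hsub := norm_smul_sub_sq_lt he hξ
  have hξ : 0 < ‖ξ‖ := norm_pos_iff.2 hξ0
  have hlt : ‖‖ξ‖⁻¹ • ξ - e‖ < ε := by
    refine lt_of_pow_lt_pow_left₀ 2 hε.le (hsub.trans_le ?_)
    have := le_max_right 0 (1 - ε ^ 2 / 2)
    linarith
  obtain ⟨h3, h4⟩ := hball (y := ‖ξ‖⁻¹ • ξ) (by rwa [dist_eq_norm])
  have hinv : 0 < ‖ξ‖⁻¹ := inv_pos.2 hξ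
  constructor
  · rw [fderiv_smul_of_homogeneous ha_hom hinv (hdiff ξ hξ0)
      (hdiff _ (smul_ne_zero hinv.ne' hξ0))] at h3
    exact h3.le
  · rw [ha_hom _ hinv, lt_inv_mul_iff₀ hξ] at h4
    linarith

theorem injOn_straighten_rpow {e : E} (he : ‖e‖ = 1) {κ : ℝ} (h0 : 0 ≤ κ) (h1 : κ < 1) {m : ℝ}
    (hm : 0 < m) (hd : ∀ ξ ∈ circularCone e κ, DifferentiableAt ℝ a ξ)
    (hd_pos : ∀ ξ ∈ circularCone e κ, 0 < fderiv ℝ a ξ e)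
    (ha_pos : ∀ ξ ∈ circularCone e κ, 0 < a ξ) :
    Set.InjOn (straighten e fun ξ => a ξ ^ m) (circularCone e κ) := by
  have hee : ⟪e, e⟫ = (1 : ℝ) := by rw [real_inner_self_eq_norm_sq, he]; norm_num
  have hmono : ∀ ξ ∈ circularCone e κ, ∀ s : ℝ, 0 < s → a ξ < a (ξ + s • e) := by
    intro ξ hξ s hs
    have hder : ∀ r ∈ Set.Icc 0 s,
        HasDerivAt (fun r : ℝ => a (ξ + r • e)) (fderiv ℝ a (ξ + r • e) e) r := by
      intro r hr
      have hmem := add_smul_mem_circularCone he h0 h1 hξ hr.1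
      have hl : HasDerivAt (fun r : ℝ => ξ + r • e) e r := by
        simpa using ((hasDerivAt_id r).smul_const e).const_add ξ
      exact (hd _ hmem).hasFDerivAt.comp_hasDerivAt r hl
    have hsm : StrictMonoOn (fun r : ℝ => a (ξ + r • e)) (Set.Icc 0 s) := by
      refine strictMonoOn_of_deriv_pos (convex_Icc 0 s)
        (fun r hr => (hder r hr).continuousAt.continuousWithinAt) fun r hr => ?_
      have hr' := interior_subset hr
      rw [(hder r hr').deriv]
      exact hd_pos _ (add_smul_mem_circularCone he h0 h1 hξ hr'.1)
    simpa using hsm (Set.left_mem_Icc.2 hs.le) (Set.right_mem_Icc.2 hs.le) hs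
  intro ξ hξ η hη hΦ
  have hp : a ξ ^ m = a η ^ m := by
    have := congrArg (fun v => ⟪e, v⟫) hΦ
    simpa [straighten, inner_add_right, real_inner_smul_right, he] using this
  have ha : a ξ = a η :=
    (Real.rpow_left_inj (ha_pos ξ hξ).le (ha_pos η hη).le hm.ne').1 hp
  have hξη : ξ = η + (⟪e, ξ⟫ - ⟪e, η⟫) • e := by
    simp only [straighten, hp] at hΦ
    have : ξ = η + (a η ^ m - ⟪e, η⟫) • e - (a η ^ m - ⟪e, ξ⟫) • e := eq_sub_of_add_eq hΦ
    rw [add_sub_assoc, ← sub_smul] at this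
    convert this using 3
    ring
  rcases lt_trichotomy (⟪e, ξ⟫ - ⟪e, η⟫) 0 with hs | hs | hs
  · have hηξ : η = ξ + (-(⟪e, ξ⟫ - ⟪e, η⟫)) • e := by
      rw [neg_smul, ← sub_eq_add_neg]
      exact eq_sub_of_add_eq hξη.symm
    have := hmono ξ hξ _ (neg_pos.2 hs)
    rw [← hηξ, ha] at this
    exact absurd this (lt_irrefl _)
  · rw [hξη, hs, zero_smul, add_zero]
  · have := hmono η hη _ hs
    rw [← hξη, ha] at this
    exact absurd this (lt_irrefl _)

end Homogeneous

end Cone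

theorem enorm_add_sq_le (z w : ℂ) : ‖z + w‖ₑ ^ 2 ≤ 2 * (‖z‖ₑ ^ 2 + ‖w‖ₑ ^ 2) := by
  have h : ‖z + w‖ ^ 2 ≤ 2 * (‖z‖ ^ 2 + ‖w‖ ^ 2) := by
    have := norm_add_le z w
    nlinarith [sq_nonneg (‖z‖ - ‖w‖), norm_nonneg (z + w), norm_nonneg z, norm_nonneg w]
  have h' := ENNReal.ofReal_le_ofReal h
  rw [ENNReal.ofReal_mul two_pos.le, ENNReal.ofReal_add (by positivity) (by positivity)] at h'
  simpa [ENNReal.ofReal_pow, ofReal_norm] using h'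

/-- The Japanese bracket weight `⟨x⟩^(-2δ)`. -/
def bracketWeight {E : Type*} [NormedAddCommGroup E] (δ : ℝ) (x : E) : ENNReal :=
  ENNReal.ofReal ((1 + ‖x‖ ^ 2) ^ (-δ))

theorem measurable_bracketWeight {E : Type*} [NormedAddCommGroup E] [MeasurableSpace E]
    [BorelSpace E] (δ : ℝ) : Measurable (bracketWeight δ : E → ENNReal) := by
  unfold bracketWeight
  fun_prop

theorem bracketWeight_le_inner {E : Type*} [NormedAddCommGroup E] [InnerProductSpace ℝ E]
    {δ : ℝ} (hδ : 0 ≤ δ) {e : E} (he : ‖e‖ = 1) (x : E) :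
    bracketWeight δ x ≤ bracketWeight δ (⟪e, x⟫ : ℝ) := by
  refine ENNReal.ofReal_le_ofReal
    (Real.rpow_le_rpow_of_nonpos (by positivity) ?_ (neg_nonpos.2 hδ))
  have : ‖(⟪e, x⟫ : ℝ)‖ ≤ ‖x‖ := by simpa [he] using norm_inner_le_norm (𝕜 := ℝ) e x
  gcongr

theorem lintegral_bracketWeight_real_ne_top {δ : ℝ} (hδ : 1 / 2 < δ) :
    ∫⁻ s : ℝ, bracketWeight δ s ≠ ⊤ := by
  have h := integrable_rpow_neg_one_add_norm_sq (E := ℝ) (μ := volume) (r := 2 * δ)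
    (by simp; linarith)
  have h' := h.lintegral_lt_top
  simp only [show -(2 * δ) / 2 = -δ by ring] at h'
  exact h'.ne

theorem evolution_integrand_eq {E : Type*} [NormedAddCommGroup E] [InnerProductSpace ℝ E]
    (b p : E → ℝ) (F : E → ℂ) (q : ℝ × E) (ξ : E) :
    Complex.exp (Complex.I * ((⟪q.2, ξ⟫ : ℝ) : ℂ)) *
      ((b ξ : ℂ) * Complex.exp (Complex.I * (q.1 : ℂ) * (p ξ : ℂ)) * F ξ)
      = Complex.exp (Complex.I * ((⟪q.2, ξ⟫ + q.1 * p ξ : ℝ) : ℂ)) * ((b ξ : ℂ) * F ξ) := by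
  push_cast
  rw [mul_add, Complex.exp_add]
  ring_nf

section Evolution

variable {E : Type*} [NormedAddCommGroup E] [InnerProductSpace ℝ E] [FiniteDimensional ℝ E]
  [MeasurableSpace E] [BorelSpace E]

/-- The solution at `q = (t, x)` with amplitude `b`, phase `p` and frequency profile `F`,
localized to frequencies in `T`. -/
def evolution (b p : E → ℝ) (F : E → ℂ) (T : Set E) (q : ℝ × E) : ℂ :=
  ∫ ξ in T, Complex.exp (Complex.I * ((⟪q.2, ξ⟫ : ℝ) : ℂ)) *
    ((b ξ : ℂ) * Complex.exp (Complex.I * (q.1 : ℂ) * (p ξ : ℂ)) * F ξ)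

theorem integrable_evolution_integrand {b p : E → ℝ} (hp : Measurable p) {F : E → ℂ}
    (hF : Integrable fun ξ => (b ξ : ℂ) * F ξ) (q : ℝ × E) :
    Integrable fun ξ => Complex.exp (Complex.I * ((⟪q.2, ξ⟫ : ℝ) : ℂ)) *
      ((b ξ : ℂ) * Complex.exp (Complex.I * (q.1 : ℂ) * (p ξ : ℂ)) * F ξ) := by
  simp_rw [evolution_integrand_eq]
  exact integrable_exp_I_mul (f := fun ξ => ⟪q.2, ξ⟫ + q.1 * p ξ) (by fun_prop) hF

theorem continuous_evolution {b p : E → ℝ} (hp : Measurable p) {F : E → ℂ}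
    (hF : Integrable fun ξ => (b ξ : ℂ) * F ξ) (T : Set E) :
    Continuous (evolution b p F T) := by
  refine continuous_of_dominated (bound := fun ξ => ‖(b ξ : ℂ) * F ξ‖)
    (fun q => (integrable_evolution_integrand hp hF q).restrict.1)
    (fun q => Filter.Eventually.of_forall fun ξ => ?_) hF.restrict.norm
    (Filter.Eventually.of_forall fun ξ => by fun_prop)
  rw [evolution_integrand_eq, norm_exp_I_mul_ofReal_mul]

theorem evolution_union {b p : E → ℝ} (hp : Measurable p) {F : E → ℂ}
    (hF : Integrable fun ξ => (b ξ : ℂ) * F ξ) {S T : Set E} (hST : Disjoint S T)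
    (hT : MeasurableSet T) (q : ℝ × E) :
    evolution b p F (S ∪ T) q = evolution b p F S q + evolution b p F T q :=
  setIntegral_union hST hT (integrable_evolution_integrand hp hF q).integrableOn
    (integrable_evolution_integrand hp hF q).integrableOn

/-- Weighted estimates on finitely many frequency sets combine to one on their union. -/
theorem exists_evolution_bound_biUnion {b p : E → ℝ} (hp : Measurable p) {w : E → ENNReal}
    (hw : Measurable w) {Γ : E → Set E} (hΓ : ∀ e, MeasurableSet (Γ e)) (s : Finset E)
    (hloc : ∀ e ∈ s, ∃ K : ENNReal, K ≠ ⊤ ∧ ∀ T ⊆ Γ e, MeasurableSet T → ∀ F : E → ℂ,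
      Integrable (fun ξ => (b ξ : ℂ) * F ξ) →
        ∫⁻ q : ℝ × E, w q.2 * ‖evolution b p F T q‖ₑ ^ 2 ≤ K * ∫⁻ ξ, ‖F ξ‖ₑ ^ 2) :
    ∃ K : ENNReal, K ≠ ⊤ ∧ ∀ T ⊆ ⋃ e ∈ s, Γ e, MeasurableSet T → ∀ F : E → ℂ,
      Integrable (fun ξ => (b ξ : ℂ) * F ξ) →
        ∫⁻ q : ℝ × E, w q.2 * ‖evolution b p F T q‖ₑ ^ 2 ≤ K * ∫⁻ ξ, ‖F ξ‖ₑ ^ 2 := by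
  classical
  induction s using Finset.induction_on with
  | empty =>
    refine ⟨0, by simp, fun T hT _ F _ => ?_⟩
    have : T = ∅ := by simpa using hT
    simp [this, evolution]
  | insert e s _ ih =>
    obtain ⟨K₁, hK₁, h₁⟩ := hloc e (Finset.mem_insert_self e s)
    obtain ⟨K₂, hK₂, h₂⟩ := ih fun e' he' => hloc e' (Finset.mem_insert_of_mem he')
    refine ⟨2 * (K₁ + K₂), by finiteness, fun T hT hTm F hF => ?_⟩
    have hA := h₁ (T ∩ Γ e) Set.inter_subset_right (hTm.inter (hΓ e)) F hF
    have hB := h₂ (T \ Γ e) (fun ξ hξ => by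
      have := hT hξ.1
      rw [Finset.set_biUnion_insert] at this
      exact this.resolve_left hξ.2) (hTm.diff (hΓ e)) F hF
    have hsplit : ∀ q, evolution b p F T q
        = evolution b p F (T ∩ Γ e) q + evolution b p F (T \ Γ e) q := by
      intro q
      rw [← evolution_union hp hF Set.disjoint_sdiff_inter.symm (hTm.diff (hΓ e)),
        Set.inter_union_sdiff]
    have hmeas : Measurable fun q : ℝ × E => w q.2 * ‖evolution b p F (T ∩ Γ e) q‖ₑ ^ 2 := by
      have := (continuous_evolution hp hF (T ∩ Γ e)).measurable
      fun_prop
    calc ∫⁻ q : ℝ × E, w q.2 * ‖evolution b p F T q‖ₑ ^ 2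
        ≤ ∫⁻ q : ℝ × E, 2 * (w q.2 * ‖evolution b p F (T ∩ Γ e) q‖ₑ ^ 2
            + w q.2 * ‖evolution b p F (T \ Γ e) q‖ₑ ^ 2) := by
          refine lintegral_mono fun q => ?_
          simp only
          rw [hsplit, ← mul_add, mul_left_comm]
          exact mul_le_mul_of_nonneg_left (enorm_add_sq_le _ _) zero_le
      _ = 2 * ((∫⁻ q : ℝ × E, w q.2 * ‖evolution b p F (T ∩ Γ e) q‖ₑ ^ 2)
            + ∫⁻ q : ℝ × E, w q.2 * ‖evolution b p F (T \ Γ e) q‖ₑ ^ 2) := by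
          rw [lintegral_const_mul' _ _ (by simp), lintegral_add_left hmeas]
      _ ≤ 2 * (K₁ * (∫⁻ ξ, ‖F ξ‖ₑ ^ 2) + K₂ * ∫⁻ ξ, ‖F ξ‖ₑ ^ 2) :=
          mul_le_mul_of_nonneg_left (add_le_add hA hB) zero_le
      _ = 2 * (K₁ + K₂) * ∫⁻ ξ, ‖F ξ‖ₑ ^ 2 := by ring

theorem exists_evolution_bound_circularCone {m : ℝ} (hm : 1 < m) {δ : ℝ} (hδ : 1 / 2 < δ)
    {a : E → ℝ} (ha_cont : Continuous a) (ha_smooth : ContDiffOn ℝ (⊤ : ℕ∞) a {(0 : E)}ᶜ)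
    (ha_hom : ∀ t : ℝ, 0 < t → ∀ ξ, a (t • ξ) = t * a ξ)
    (ha_pos : ∀ ξ : E, ξ ≠ 0 → 0 < a ξ) {e : E} (he : ‖e‖ = 1) :
    ∃ κ < 1, ∃ K : ENNReal, K ≠ ⊤ ∧ ∀ T ⊆ circularCone e κ, MeasurableSet T → ∀ F : E → ℂ,
      Integrable (fun ξ => ((‖ξ‖ ^ ((m - 1) / 2) : ℝ) : ℂ) * F ξ) →
        ∫⁻ q : ℝ × E, bracketWeight δ q.2 *
          ‖evolution (fun ξ => ‖ξ‖ ^ ((m - 1) / 2)) (fun ξ => a ξ ^ m) F T q‖ₑ ^ 2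
            ≤ K * ∫⁻ ξ, ‖F ξ‖ₑ ^ 2 := by
  obtain ⟨κ, c, h0, h1, hc, hκ⟩ := exists_circularCone_fderiv_ge ha_smooth ha_hom ha_pos he
  set C : ℝ := (m * (c ^ (m - 1) * c))⁻¹ with hC
  have hm0 : 0 < m := by linarith
  have hd : ∀ ξ ∈ circularCone e κ, DifferentiableAt ℝ a ξ := fun ξ hξ =>
    (ha_smooth.contDiffAt (isOpen_compl_singleton.mem_nhds
      (ne_zero_of_mem_circularCone hξ))).differentiableAt (by simp)
  have hap : ∀ ξ ∈ circularCone e κ, 0 < a ξ := fun ξ hξ =>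
    ha_pos ξ (ne_zero_of_mem_circularCone hξ)
  have hdp : ∀ ξ ∈ circularCone e κ, 0 < fderiv ℝ a ξ e := fun ξ hξ => hc.trans_le (hκ ξ hξ).1
  refine ⟨κ, h1, (∫⁻ s : ℝ, bracketWeight δ s) *
    (ENNReal.ofReal ((2 * π) ^ Module.finrank ℝ E) * ENNReal.ofReal C), ?_, ?_⟩
  · have := lintegral_bracketWeight_real_ne_top hδ
    finiteness
  intro T hT hTm F hF
  have hb : ∀ ξ ∈ T, (‖ξ‖ ^ ((m - 1) / 2)) ^ 2
      ≤ C * ((m * a ξ ^ (m - 1)) • fderiv ℝ a ξ) e := by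
    intro ξ hξ
    obtain ⟨h2, h3⟩ := hκ ξ (hT hξ)
    have hsq : (‖ξ‖ ^ ((m - 1) / 2)) ^ 2 = ‖ξ‖ ^ (m - 1) := by
      rw [← Real.rpow_natCast, ← Real.rpow_mul (norm_nonneg _)]
      norm_num
    have hpow : c ^ (m - 1) * ‖ξ‖ ^ (m - 1) ≤ a ξ ^ (m - 1) := by
      rw [← Real.mul_rpow hc.le (norm_nonneg _)]
      exact Real.rpow_le_rpow (by positivity) h3 (by linarith)
    rw [hsq, hC, le_inv_mul_iff₀ (by positivity)]
    calc m * (c ^ (m - 1) * c) * ‖ξ‖ ^ (m - 1)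
        = m * (c ^ (m - 1) * ‖ξ‖ ^ (m - 1)) * c := by ring
      _ ≤ m * a ξ ^ (m - 1) * fderiv ℝ a ξ e := by
        have := hap ξ (hT hξ)
        gcongr
      _ = _ := by simp
  have hmain := lintegral_weight_mul_enorm_sq_evolution_le he hTm
    (p := fun ξ => a ξ ^ m) (p' := fun ξ => (m * a ξ ^ (m - 1)) • fderiv ℝ a ξ)
    (ha_cont.measurable.pow_const m)
    (fun ξ hξ => ((hd ξ (hT hξ)).hasFDerivAt.rpow_const (Or.inl (hap ξ (hT hξ)).ne')))
    (fun ξ hξ => by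
      have := hap ξ (hT hξ)
      have := hdp ξ (hT hξ)
      simp only [smul_apply, smul_eq_mul]
      positivity)
    ((injOn_straighten_rpow he h0 h1 hm0 hd hdp hap).mono hT) hb hF
    (W := bracketWeight δ) (measurable_bracketWeight δ)
  refine le_trans (lintegral_mono fun q => ?_) (hmain.trans_eq (by ring))
  exact mul_le_mul_of_nonneg_right (bracketWeight_le_inner (by linarith) he _) zero_le

theorem exists_evolution_bound [Nontrivial E] {m : ℝ} (hm : 1 < m) {δ : ℝ} (hδ : 1 / 2 < δ)
    {a : E → ℝ} (ha_cont : Continuous a) (ha_smooth : ContDiffOn ℝ (⊤ : ℕ∞) a {(0 : E)}ᶜ)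
    (ha_hom : ∀ t : ℝ, 0 < t → ∀ ξ, a (t • ξ) = t * a ξ)
    (ha_pos : ∀ ξ : E, ξ ≠ 0 → 0 < a ξ) :
    ∃ K : ENNReal, K ≠ ⊤ ∧ ∀ F : E → ℂ,
      Integrable (fun ξ => ((‖ξ‖ ^ ((m - 1) / 2) : ℝ) : ℂ) * F ξ) →
        ∫⁻ q : ℝ × E, bracketWeight δ q.2 *
          ‖evolution (fun ξ => ‖ξ‖ ^ ((m - 1) / 2)) (fun ξ => a ξ ^ m) F Set.univ q‖ₑ ^ 2
            ≤ K * ∫⁻ ξ, ‖F ξ‖ₑ ^ 2 := by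
  choose! κ hκ hloc using fun (e : E) (he : ‖e‖ = 1) =>
    exists_evolution_bound_circularCone hm hδ ha_cont ha_smooth ha_hom ha_pos he
  obtain ⟨s, hs, hcover⟩ := (isCompact_sphere (0 : E) 1).elim_nhds_subcover
    (fun e => circularCone e (κ e)) fun e he =>
      (isOpen_circularCone _ _).mem_nhds
        (self_mem_circularCone (mem_sphere_zero_iff_norm.1 he) (hκ e (mem_sphere_zero_iff_norm.1 he)))
  obtain ⟨K, hK, h⟩ := exists_evolution_bound_biUnion (ha_cont.measurable.pow_const m)
    (measurable_bracketWeight δ) (fun e => (isOpen_circularCone e (κ e)).measurableSet) s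
    fun e he => hloc e (mem_sphere_zero_iff_norm.1 (hs e he))
  refine ⟨K, hK, fun F hF => ?_⟩
  have hsub : ({0}ᶜ : Set E) ⊆ ⋃ e ∈ s, circularCone e (κ e) := by
    intro ξ hξ
    have hξ0 : 0 < ‖ξ‖ := norm_pos_iff.2 hξ
    have hmem : ‖ξ‖⁻¹ • ξ ∈ Metric.sphere (0 : E) 1 := by
      simp [norm_smul, hξ0.ne']
    obtain ⟨e, he, hmem'⟩ := Set.mem_iUnion₂.1 (hcover hmem)
    refine Set.mem_iUnion₂.2 ⟨e, he, ?_⟩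
    have := smul_mem_circularCone hmem' hξ0
    rwa [smul_inv_smul₀ hξ0.ne'] at this
  have heq : ∀ (b p : E → ℝ) (q : ℝ × E),
      evolution b p F Set.univ q = evolution b p F {0}ᶜ q := fun b p q =>
    setIntegral_congr_set (by
      have h0 : ({0}ᶜ : Set E) =ᵐ[volume] Set.univ := by
        rw [ae_eq_univ, compl_compl]
        exact measure_singleton 0
      exact h0.symm)
  simp_rw [heq]
  exact h _ hsub (measurableSet_singleton 0).compl F hF

end Evolution

section Schwartz

open FourierTransform

theorem FT_eq_fourier (n : ℕ) (f : EuclideanSpace ℝ (Fin n) → ℂ) (ξ : EuclideanSpace ℝ (Fin n)) :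
    FT n f ξ = ((2 * π) ^ (-(n : ℝ) / 2) : ℝ) • 𝓕 f ((2 * π)⁻¹ • ξ) := by
  rw [FT, Real.fourier_eq']
  congr 1
  refine integral_congr_ae (Filter.Eventually.of_forall fun x => ?_)
  simp only [inner_smul_right, smul_eq_mul]
  congr 2
  push_cast
  field_simp

theorem lintegral_enorm_sq_FT_le (n : ℕ) {f : EuclideanSpace ℝ (Fin n) → ℂ}
    (hf : Integrable f) : ∫⁻ ξ, ‖FT n f ξ‖ₑ ^ 2 ≤
      ‖((2 * π) ^ (-(n : ℝ) / 2) : ℝ)‖ₑ ^ 2 * (ENNReal.ofReal ((2 * π) ^ n) *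
        ∫⁻ x, ‖f x‖ₑ ^ 2) := by
  have h := lintegral_enorm_sq_integral_exp_le hf
  rw [finrank_euclideanSpace_fin, ← lintegral_neg_eq_self] at h
  have hFT : ∀ ξ, ‖FT n f ξ‖ₑ ^ 2 = ‖((2 * π) ^ (-(n : ℝ) / 2) : ℝ)‖ₑ ^ 2 *
      ‖∫ x, Complex.exp (-Complex.I * ((⟪x, ξ⟫ : ℝ) : ℂ)) * f x‖ₑ ^ 2 := fun ξ => by
    rw [FT, enorm_smul, mul_pow]
  simp_rw [hFT]
  rw [lintegral_const_mul' _ _ (by finiteness)]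
  refine mul_le_mul_of_nonneg_left (le_trans (le_of_eq ?_) h) zero_le
  refine lintegral_congr fun ξ => ?_
  congr 3
  funext x
  simp [real_inner_comm]

theorem integrable_norm_rpow_mul_FT (n : ℕ) {r : ℝ} (hr : 0 ≤ r)
    (φ : SchwartzMap (EuclideanSpace ℝ (Fin n)) ℂ) :
    Integrable fun ξ => ((‖ξ‖ ^ r : ℝ) : ℂ) * FT n (fun y => φ y) ξ := by
  have hpi : (0 : ℝ) < 2 * π := by positivity
  set ψ := 𝓕 φ with hψ
  set k := ⌈r⌉₊ with hk
  have h1 : Integrable fun η => ‖ψ η‖ + (2 * π) ^ k * (‖η‖ ^ k * ‖ψ η‖) :=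
    ψ.integrable.norm.add ((ψ.integrable_pow_mul volume k).const_mul _)
  have h2 := (h1.comp_smul (inv_ne_zero hpi.ne')).const_mul ((2 * π) ^ (-(n : ℝ) / 2))
  have hFT : ∀ ξ, FT n (fun y => φ y) ξ
      = ((2 * π) ^ (-(n : ℝ) / 2) : ℝ) • ψ ((2 * π)⁻¹ • ξ) := fun ξ => by
    rw [FT_eq_fourier, hψ, SchwartzMap.fourier_coe]
  simp_rw [hFT]
  have hψc := ψ.continuous
  refine h2.mono ?_ (Filter.Eventually.of_forall fun ξ => ?_)
  · have : Continuous fun ξ : EuclideanSpace ℝ (Fin n) => ‖ξ‖ ^ r :=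
      continuous_norm.rpow_const fun _ => Or.inr hr
    exact Continuous.aestronglyMeasurable (by fun_prop)
  · have hcpos : 0 < (2 * π) ^ (-(n : ℝ) / 2) := by positivity
    have hpow : ‖ξ‖ ^ r ≤ 1 + ‖ξ‖ ^ k := by
      rcases le_total ‖ξ‖ 1 with h | h
      · have := Real.rpow_le_one (norm_nonneg ξ) h hr
        have : 0 ≤ ‖ξ‖ ^ k := by positivity
        linarith
      · have := Real.rpow_le_rpow_of_exponent_le h (Nat.le_ceil r)
        rw [Real.rpow_natCast] at this
        linarith
    have hscale : (2 * π) ^ k * ‖(2 * π)⁻¹ • ξ‖ ^ k = ‖ξ‖ ^ k := by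
      rw [norm_smul, norm_inv, Real.norm_of_nonneg hpi.le, ← mul_pow, mul_inv_cancel_left₀ hpi.ne']
    rw [← mul_assoc, hscale, norm_mul, norm_smul, Complex.norm_real,
      Real.norm_of_nonneg (by positivity), Real.norm_of_nonneg hcpos.le,
      Real.norm_of_nonneg (by positivity)]
    calc ‖ξ‖ ^ r * ((2 * π) ^ (-(n : ℝ) / 2) * ‖ψ ((2 * π)⁻¹ • ξ)‖)
        ≤ (1 + ‖ξ‖ ^ k) * ((2 * π) ^ (-(n : ℝ) / 2) * ‖ψ ((2 * π)⁻¹ • ξ)‖) := by gcongr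
      _ = _ := by ring

end Schwartz

theorem enorm_sqrt_rpow_neg_sq {E : Type*} [NormedAddCommGroup E] (δ : ℝ) (x : E) :
    ‖((Real.sqrt (1 + ‖x‖ ^ 2) ^ (-δ) : ℝ) : ℂ)‖ₑ ^ 2 = bracketWeight δ x := by
  rw [← ofReal_norm, Complex.norm_real, Real.norm_of_nonneg (by positivity),
    ← ENNReal.ofReal_pow (by positivity), bracketWeight, ← Real.rpow_natCast,
    ← Real.rpow_mul (by positivity), mul_comm, Real.rpow_mul (by positivity), Real.rpow_natCast,
    Real.sq_sqrt (by positivity)]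

theorem exists_pos_le_ofReal_mul_of_sq_le {ι : Type*} {f g : ι → ENNReal} {K : ENNReal}
    (hK : K ≠ ⊤) (h : ∀ i, f i ^ 2 ≤ K * g i ^ 2) :
    ∃ C > 0, ∀ i, f i ≤ ENNReal.ofReal C * g i := by
  refine ⟨K.toReal + 1, by positivity, fun i => ?_⟩
  have hle : K ≤ ENNReal.ofReal (K.toReal + 1) ^ 2 := by
    rw [← ENNReal.ofReal_pow (by positivity)]
    refine ENNReal.le_ofReal_iff_toReal_le hK (by positivity) |>.2 ?_
    nlinarith [ENNReal.toReal_nonneg (a := K)]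
  refine (ENNReal.pow_le_pow_left_iff two_ne_zero).1 ((h i).trans ?_)
  rw [mul_pow]
  gcongr

theorem smoothing_type_I_homogeneous (n : ℕ) (hn : 2 ≤ n) (m : ℝ) (hm : 1 < m)
    (δ : ℝ) (hδ : 1 / 2 < δ)
    (a : EuclideanSpace ℝ (Fin n) → ℝ)
    (ha_cont : Continuous a)
    (ha_smooth : ContDiffOn ℝ (⊤ : ℕ∞) a {(0 : EuclideanSpace ℝ (Fin n))}ᶜ)
    (ha_hom : ∀ t : ℝ, 0 < t → ∀ ξ, a (t • ξ) = t * a ξ)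
    (ha_pos : ∀ ξ : EuclideanSpace ℝ (Fin n), ξ ≠ 0 → 0 < a ξ) :
    ∃ C > 0, ∀ φ : SchwartzMap (EuclideanSpace ℝ (Fin n)) ℂ,
      eLpNorm (fun tx : ℝ × EuclideanSpace ℝ (Fin n) =>
          ((Real.sqrt (1 + ‖tx.2‖ ^ 2) ^ (-δ) : ℝ) : ℂ) *
            mult n (fun ξ => ((‖ξ‖ ^ ((m - 1) / 2) : ℝ) : ℂ) *
                Complex.exp (Complex.I * (tx.1 : ℂ) * ((a ξ ^ m : ℝ) : ℂ)))
              (fun y => φ y) tx.2) 2 volume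
        ≤ ENNReal.ofReal C * eLpNorm (fun x => φ x) 2 volume := by
  have : NeZero n := ⟨by omega⟩
  obtain ⟨K, hK, hbound⟩ := exists_evolution_bound hm hδ ha_cont ha_smooth ha_hom ha_pos
  set c : ℝ := (2 * π) ^ (-(n : ℝ) / 2) with hc
  refine exists_pos_le_ofReal_mul_of_sq_le
    (K := ‖c‖ₑ ^ 2 * (K * (‖c‖ₑ ^ 2 * ENNReal.ofReal ((2 * π) ^ n)))) (by finiteness) fun φ => ?_
  rw [← lintegral_enorm_sq_eq_eLpNorm_sq, ← lintegral_enorm_sq_eq_eLpNorm_sq]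
  have hF := hbound _ (integrable_norm_rpow_mul_FT n (r := (m - 1) / 2) (by linarith) φ)
  have hpoint : ∀ q : ℝ × EuclideanSpace ℝ (Fin n),
      ‖((Real.sqrt (1 + ‖q.2‖ ^ 2) ^ (-δ) : ℝ) : ℂ) *
        mult n (fun ξ => ((‖ξ‖ ^ ((m - 1) / 2) : ℝ) : ℂ) *
          Complex.exp (Complex.I * (q.1 : ℂ) * ((a ξ ^ m : ℝ) : ℂ))) (fun y => φ y) q.2‖ₑ ^ 2
      = ‖c‖ₑ ^ 2 * (bracketWeight δ q.2 * ‖evolution (fun ξ => ‖ξ‖ ^ ((m - 1) / 2))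
          (fun ξ => a ξ ^ m) (FT n fun y => φ y) Set.univ q‖ₑ ^ 2) := by
    intro q
    rw [enorm_mul, mul_pow, enorm_sqrt_rpow_neg_sq, mult, IFT, enorm_smul, mul_pow, evolution,
      setIntegral_univ]
    ring
  simp_rw [hpoint]
  rw [lintegral_const_mul' _ _ (by finiteness), mul_assoc]
  refine mul_le_mul_of_nonneg_left (hF.trans ?_) zero_le
  rw [mul_assoc, mul_assoc]
  exact mul_le_mul_of_nonneg_left (lintegral_enorm_sq_FT_le n φ.integrable) zero_le
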